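/- Let k ≥ 5, n ≥ k, and let f : F_2^n → {0,1} satisfy f(0)=1, f̂(0) = 1/2^{k−1}, with all other Fourier coefficients in {0, ±1/2^k}. Then for B = {β : f̂(β) = −1/2^k}: the linear span of B has size 2^k = 2(|B|+1), and B+B is a linear subspace of F_2^n of dimension k−1. -/

import Mathlib

open Finset Pointwise

/-- The Fourier coefficient `f̂(α) = E_x[f(x)·(-1)^⟨α,x⟩]` of `f : F_2^n → ℝ`. -/
noncomputable def fc {n : ℕ} (f : (Fin n → ZMod 2) → ℝ) (α : Fin n → ZMod 2) : ℝ :=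
  (∑ x : Fin n → ZMod 2, f x * (-1 : ℝ) ^ (∑ i, α i * x i : ZMod 2).val) / 2 ^ n

section

variable {n : ℕ}

/-- The character `x ↦ (-1)^⟨a, x⟩` of `F_2^n`. -/
noncomputable def chi (a x : Fin n → ZMod 2) : ℝ := (-1) ^ (∑ i, a i * x i : ZMod 2).val

lemma neg_one_pow_val_add (u v : ZMod 2) :
    (-1 : ℝ) ^ (u + v).val = (-1) ^ u.val * (-1) ^ v.val := by
  rw [ZMod.val_add, ← neg_one_pow_eq_pow_mod_two, pow_add]

lemma chi_comm (a x : Fin n → ZMod 2) : chi a x = chi x a := by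
  simp only [chi, mul_comm]

lemma chi_add_right (a x y : Fin n → ZMod 2) : chi a (x + y) = chi a x * chi a y := by
  simp only [chi, Pi.add_apply, mul_add, Finset.sum_add_distrib, neg_one_pow_val_add]

lemma chi_add_left (a b x : Fin n → ZMod 2) : chi (a + b) x = chi a x * chi b x := by
  rw [chi_comm, chi_add_right, chi_comm x a, chi_comm x b]

lemma chi_zero_right (a : Fin n → ZMod 2) : chi a 0 = 1 := by simp [chi]

lemma chi_zero_left (x : Fin n → ZMod 2) : chi 0 x = 1 := by simp [chi]

lemma chi_eq_or (a x : Fin n → ZMod 2) : chi a x = 1 ∨ chi a x = -1 := neg_one_pow_eq_or ℝ _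

lemma pi_zmod_two_add_self (x : Fin n → ZMod 2) : x + x = 0 := by
  funext i
  exact CharTwo.add_self_eq_zero (x i)

lemma pi_zmod_two_add_add_self (x y : Fin n → ZMod 2) : x + (x + y) = y := by
  rw [← add_assoc, pi_zmod_two_add_self, zero_add]

lemma pi_zmod_two_neg (x : Fin n → ZMod 2) : -x = x :=
  neg_eq_of_add_eq_zero_left (pi_zmod_two_add_self x)

lemma pi_zmod_two_add_eq_zero {x y : Fin n → ZMod 2} : x + y = 0 ↔ x = y := by
  rw [add_eq_zero_iff_eq_neg, pi_zmod_two_neg]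

lemma exists_chi_eq_neg_one {a : Fin n → ZMod 2} (ha : a ≠ 0) : ∃ y, chi a y = -1 := by
  obtain ⟨i, hi⟩ := Function.ne_iff.1 ha
  refine ⟨Pi.single i 1, ?_⟩
  have h1 : a i = 1 := by
    have : ∀ u : ZMod 2, u ≠ 0 → u = 1 := by decide
    exact this _ hi
  have : (1 : ZMod 2).val = 1 := rfl
  simp [chi, Pi.single_apply, h1, this]

lemma sum_chi (a : Fin n → ZMod 2) : ∑ x, chi a x = if a = 0 then (2 : ℝ) ^ n else 0 := by
  split_ifs with ha
  · subst ha
    simp [chi_zero_left]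
  · obtain ⟨y, hy⟩ := exists_chi_eq_neg_one ha
    have h1 : ∑ x, chi a (x + y) = ∑ x, chi a x :=
      Fintype.sum_equiv (Equiv.addRight y) _ _ fun x => rfl
    simp only [chi_add_right, hy, mul_neg, mul_one, Finset.sum_neg_distrib] at h1
    linarith

lemma sum_mul_chi (f : (Fin n → ZMod 2) → ℝ) (a : Fin n → ZMod 2) :
    ∑ x, f x * chi a x = 2 ^ n * fc f a := by
  unfold fc chi
  field_simp

lemma sum_fc_mul_chi (f : (Fin n → ZMod 2) → ℝ) (x : Fin n → ZMod 2) :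
    ∑ a, fc f a * chi a x = f x := by
  have h : ∀ a, fc f a * chi a x = ∑ y, f y * chi (y + x) a / 2 ^ n := by
    intro a
    rw [← mul_right_inj' (pow_ne_zero n (two_ne_zero (α := ℝ))), ← mul_assoc, ← sum_mul_chi,
      Finset.sum_mul, Finset.mul_sum]
    refine Finset.sum_congr rfl fun y _ => ?_
    rw [chi_comm (y + x), chi_add_right]
    field_simp
  simp only [h]
  rw [Finset.sum_comm]
  simp only [← Finset.sum_div, ← Finset.mul_sum, sum_chi, pi_zmod_two_add_eq_zero]
  simp

lemma sum_fc_mul_fc (f : (Fin n → ZMod 2) → ℝ) (b : Fin n → ZMod 2) :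
    ∑ a, fc f a * fc f (a + b) = fc (fun x => f x * f x) b := by
  rw [← mul_right_inj' (pow_ne_zero n (two_ne_zero (α := ℝ))), ← sum_mul_chi, Finset.mul_sum]
  have h : ∀ a, 2 ^ n * (fc f a * fc f (a + b)) = ∑ x, f x * chi b x * (fc f a * chi a x) := by
    intro a
    rw [mul_left_comm, ← sum_mul_chi, Finset.mul_sum]
    refine Finset.sum_congr rfl fun x _ => ?_
    rw [chi_add_left]
    ring
  simp only [h]
  rw [Finset.sum_comm]
  refine Finset.sum_congr rfl fun x _ => ?_
  rw [← Finset.mul_sum, sum_fc_mul_chi]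
  ring

/-- A rescaled Fourier transform `F = 2^k f̂` of a Boolean function `f` with `f 0 = 1`,
`F 0 = 2` and all other values of `F` in `{0, 1, -1}`. -/
structure IsFlatSpectrum (k : ℕ) (F : (Fin n → ZMod 2) → ℝ) : Prop where
  zero : F 0 = 2
  apply_of_ne : ∀ a, a ≠ 0 → F a = 0 ∨ F a = 1 ∨ F a = -1
  sum : ∑ a, F a = 2 ^ k
  conv : ∀ b, ∑ a, F a * F (a + b) = 2 ^ k * F b


variable {k : ℕ} {F : (Fin n → ZMod 2) → ℝ}

namespace IsFlatSpectrum

lemma ne_zero_of_eq_neg_one (hF : IsFlatSpectrum k F) {a : Fin n → ZMod 2} (ha : F a = -1) :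
    a ≠ 0 := by
  rintro rfl
  rw [hF.zero] at ha
  norm_num at ha

lemma ne_zero_of_eq_one (hF : IsFlatSpectrum k F) {a : Fin n → ZMod 2} (ha : F a = 1) :
    a ≠ 0 := by
  rintro rfl
  rw [hF.zero] at ha
  norm_num at ha

lemma card_neg (hF : IsFlatSpectrum k F) :
    2 * ((#{a | F a = -1} : ℝ) + 1) = 2 ^ k := by
  have h2 := hF.conv 0
  rw [hF.zero] at h2
  simp only [add_zero] at h2
  have hpt : ∀ a, F a * F a - F a =
      2 * ((if F a = -1 then 1 else 0) + if a = 0 then 1 else 0) := by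
    intro a
    by_cases ha : a = 0
    · subst ha; rw [hF.zero]; norm_num
    · rcases hF.apply_of_ne a ha with h | h | h <;> simp [h, ha] <;> norm_num
  have h3 := Finset.sum_congr (rfl : (Finset.univ : Finset (Fin n → ZMod 2)) = _)
    fun a _ => hpt a
  rw [Finset.sum_sub_distrib, h2, hF.sum, ← Finset.mul_sum, Finset.sum_add_distrib,
    Finset.sum_boole] at h3
  simp at h3
  linarith

lemma card_pos (hF : IsFlatSpectrum k F) :
    2 * ((#{a | F a = 1} : ℝ) + 3) = 3 * 2 ^ k := by
  have h2 := hF.conv 0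
  rw [hF.zero] at h2
  simp only [add_zero] at h2
  have hpt : ∀ a, F a * F a + F a =
      2 * ((if F a = 1 then 1 else 0) + 3 * if a = 0 then 1 else 0) := by
    intro a
    by_cases ha : a = 0
    · subst ha; rw [hF.zero]; norm_num
    · rcases hF.apply_of_ne a ha with h | h | h <;> simp [h, ha] <;> norm_num
  have h3 := Finset.sum_congr (rfl : (Finset.univ : Finset (Fin n → ZMod 2)) = _)
    fun a _ => hpt a
  rw [Finset.sum_add_distrib, h2, hF.sum, ← Finset.mul_sum, Finset.sum_add_distrib,
    Finset.sum_boole, ← Finset.mul_sum] at h3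
  simp at h3
  linarith

lemma add_eq_one (hF : IsFlatSpectrum k F) {a b : Fin n → ZMod 2} (hb : F b = -1)
    (ha : F a = -1) (hab : a ≠ b) : F (a + b) = 1 := by
  have hb0 := hF.ne_zero_of_eq_neg_one hb
  have ha0 := hF.ne_zero_of_eq_neg_one ha
  let h : (Fin n → ZMod 2) → ℝ := fun c => F c * F (c + b) + (if F c = -1 then 1 else 0) +
    (if F (c + b) = -1 then 1 else 0) + (if c = 0 then 1 else 0) + (if c = b then 1 else 0)
  have hnn : ∀ c, 0 ≤ h c := by
    intro c
    simp only [h]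
    by_cases hc : c = 0
    · subst hc; simp [hF.zero, hb, hb0.symm]; norm_num
    by_cases hcb : c = b
    · subst hcb; simp [hF.zero, hb, hb0, pi_zmod_two_add_self]; norm_num
    have hcb' : c + b ≠ 0 := fun h => hcb (pi_zmod_two_add_eq_zero.1 h)
    rcases hF.apply_of_ne c hc with h1 | h1 | h1 <;>
    rcases hF.apply_of_ne _ hcb' with h2 | h2 | h2 <;> simp [h1, h2, hc, hcb] <;> norm_num
  have hsum : ∑ c, h c = 0 := by
    have hshift : ∑ c, (if F (c + b) = -1 then (1 : ℝ) else 0) =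
        ∑ c, (if F c = -1 then (1 : ℝ) else 0) :=
      Fintype.sum_equiv (Equiv.addRight b) _ _ fun x => rfl
    simp only [h, Finset.sum_add_distrib, hshift, hF.conv, hb, Finset.sum_boole]
    have := hF.card_neg
    simp [Finset.filter_eq']
    linarith
  have hz := (Finset.sum_eq_zero_iff_of_nonneg fun c _ => hnn c).1 hsum a (Finset.mem_univ _)
  have hab' : a + b ≠ 0 := fun h => hab (pi_zmod_two_add_eq_zero.1 h)
  rcases hF.apply_of_ne _ hab' with h2 | h2 | h2
  · simp [h, ha, h2, ha0, hab] at hz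
  · exact h2
  · simp [h, ha, h2, ha0, hab] at hz
    norm_num at hz

lemma twist (hF : IsFlatSpectrum k F) {s : Fin n → ZMod 2} (hs : ∑ a, F a * chi a s = 2 ^ k) :
    IsFlatSpectrum k fun a => F a * chi a s where
  zero := by simp [hF.zero, chi_zero_left]
  apply_of_ne a ha := by
    rcases hF.apply_of_ne a ha with h | h | h <;> rcases chi_eq_or a s with h' | h' <;>
      simp [h, h']
  sum := hs
  conv b := by
    rw [← mul_assoc, ← hF.conv b, Finset.sum_mul]
    refine Finset.sum_congr rfl fun a _ => ?_
    rw [chi_add_left]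
    rcases chi_eq_or a s with h | h <;> simp [h] <;> ring

end IsFlatSpectrum

lemma card_addSubgroup_dvd_card {G : Type*} [AddCommGroup G] (K : AddSubgroup G) (X : Finset G)
    (h : ∀ x ∈ X, ∀ g ∈ K, x + g ∈ X) : Nat.card K ∣ #X := by
  classical
  rw [Finset.card_eq_sum_card_image (QuotientAddGroup.mk (s := K)) X]
  refine Finset.dvd_sum fun c hc => ?_
  obtain ⟨x, hx, rfl⟩ := Finset.mem_image.1 hc
  have hset : (({y ∈ X | (y : G ⧸ K) = x} : Finset G) : Set G) =
      (fun g => x + g) '' (K : Set G) := by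
    ext y
    simp only [Finset.coe_filter, Set.mem_ofPred_eq, Set.mem_image, SetLike.mem_coe]
    constructor
    · rintro ⟨_, hy⟩
      exact ⟨-x + y, QuotientAddGroup.eq.1 hy.symm, by abel⟩
    · rintro ⟨g, hg, rfl⟩
      exact ⟨h x hx g hg, (QuotientAddGroup.eq.2 (by simpa using hg)).symm⟩
  rw [← Set.ncard_coe_finset, hset, Set.ncard_image_of_injective _ (add_right_injective x)]
  rfl

/-- The subgroup of periods of a subset of `F_2^n`. -/
def periods (X : Finset (Fin n → ZMod 2)) : AddSubgroup (Fin n → ZMod 2) where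
  carrier := {g | ∀ x ∈ X, x + g ∈ X}
  zero_mem' := by simp
  add_mem' := fun {a b} ha hb x hx => by
    rw [← add_assoc]
    exact hb _ (ha x hx)
  neg_mem' := fun {a} ha => by rwa [pi_zmod_two_neg]

lemma add_mem_periods {X Y Z : Finset (Fin n → ZMod 2)} (hXY : #X = #Y)
    (h : ∀ z ∈ Z, ∀ y ∈ Y, z + y ∈ X) {z z' : Fin n → ZMod 2} (hz : z ∈ Z) (hz' : z' ∈ Z) :
    z + z' ∈ periods X := by
  intro x hx
  have himg : Y.image (z + ·) = X := by
    refine Finset.eq_of_subset_of_card_le (Finset.image_subset_iff.2 (h z hz)) ?_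
    rw [Finset.card_image_of_injective _ (add_right_injective z), hXY]
  rw [← himg, Finset.mem_image] at hx
  obtain ⟨y, hy, rfl⟩ := hx
  have : z + y + (z + z') = z' + y := by
    rw [show z + y + (z + z') = z + (z + (z' + y)) by abel, pi_zmod_two_add_add_self]
  rw [this]
  exact h z' hz' y hy

lemma exists_natCard_addSubgroup (K : AddSubgroup (Fin n → ZMod 2)) :
    ∃ j, Nat.card K = 2 ^ j := by
  have h := K.card_addSubgroup_dvd_card
  rw [Nat.card_eq_fintype_card (α := Fin n → ZMod 2)] at h
  simp only [Fintype.card_pi, ZMod.card, Finset.prod_const, Finset.card_univ,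
    Fintype.card_fin] at h
  obtain ⟨j, _, hj⟩ := (Nat.dvd_prime_pow Nat.prime_two).1 h
  exact ⟨j, hj⟩

namespace IsFlatSpectrum

variable {s : Fin n → ZMod 2}

lemma card_neg_nat (hF : IsFlatSpectrum k F) (hk : k ≠ 0) :
    #{a | F a = -1} + 1 = 2 ^ (k - 1) := by
  have h := hF.card_neg
  obtain ⟨j, rfl⟩ := Nat.exists_eq_succ_of_ne_zero hk
  rw [Nat.succ_eq_add_one, pow_succ'] at h
  have h' := mul_left_cancel₀ two_ne_zero h
  simp only [Nat.succ_eq_add_one, add_tsub_cancel_right]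
  exact_mod_cast h'

lemma card_split (F : (Fin n → ZMod 2) → ℝ) (s : Fin n → ZMod 2) :
    #{a | F a = -1 ∧ chi a s = 1} + #{a | F a = -1 ∧ chi a s = -1} = #{a | F a = -1} := by
  rw [← Finset.card_filter_add_card_filter_not (s := {a | F a = -1}) (fun a => chi a s = 1),
    Finset.filter_filter, Finset.filter_filter]
  congr 3
  ext a
  rcases chi_eq_or a s with h | h <;> simp [h] <;> norm_num

lemma card_pos_chi_neg (hF : IsFlatSpectrum k F) (hs : ∑ a, F a * chi a s = 2 ^ k) :
    #{a | F a = -1 ∧ chi a s = -1} = #{a | F a = 1 ∧ chi a s = -1} := by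
  have h1 := hF.card_neg
  have h2 := (hF.twist hs).card_neg
  have h3 := card_split F s
  have h4 := Finset.card_filter_add_card_filter_not
    (s := {a | F a * chi a s = -1}) (fun a => chi a s = 1)
  rw [Finset.filter_filter, Finset.filter_filter] at h4
  have h5 : ∀ a, F a * chi a s = -1 ∧ chi a s = 1 ↔ F a = -1 ∧ chi a s = 1 := by
    intro a
    rcases chi_eq_or a s with h | h <;> simp [h]
    norm_num
  have h6 : ∀ a, F a * chi a s = -1 ∧ ¬ chi a s = 1 ↔ F a = 1 ∧ chi a s = -1 := by
    intro a
    rcases chi_eq_or a s with h | h <;> simp [h] <;> norm_num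
  simp only [h5, h6] at h4
  have h7 : #{a | F a = -1} = #{a | F a * chi a s = -1} := by
    have : (#{a | F a = -1} : ℝ) = #{a | F a * chi a s = -1} := by linarith
    exact_mod_cast this
  omega

lemma add_mem_chi_neg (hF : IsFlatSpectrum k F) (hs : ∑ a, F a * chi a s = 2 ^ k) :
    ∀ z ∈ ({a | F a = -1 ∧ chi a s = 1} : Finset (Fin n → ZMod 2)),
      ∀ y ∈ ({a | F a = 1 ∧ chi a s = -1} : Finset (Fin n → ZMod 2)),
      z + y ∈ ({a | F a = -1 ∧ chi a s = -1} : Finset (Fin n → ZMod 2)) := by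
  simp only [Finset.mem_filter, Finset.mem_univ, true_and]
  rintro z ⟨hz, hzs⟩ y ⟨hy, hys⟩
  have hzy : z ≠ y := by
    rintro rfl
    rw [hz] at hy
    norm_num at hy
  have h := (hF.twist hs).add_eq_one (a := z) (b := y) (by simp [hy, hys]) (by simp [hz, hzs]) hzy
  simp only [chi_add_left, hzs, hys] at h ⊢
  constructor
  · linarith
  · norm_num

lemma card_le_card_periods (hF : IsFlatSpectrum k F) (hs : ∑ a, F a * chi a s = 2 ^ k) :
    #{a | F a = -1 ∧ chi a s = 1} ≤ Nat.card (periods {a | F a = -1 ∧ chi a s = -1}) := by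
  rcases Finset.eq_empty_or_nonempty
    ({a | F a = -1 ∧ chi a s = 1} : Finset (Fin n → ZMod 2)) with h | ⟨z, hz⟩
  · simp [h]
  rw [← Finset.card_image_of_injective _ (add_right_injective z), ← Set.ncard_coe_finset]
  refine Set.ncard_le_ncard ?_ (Set.toFinite _)
  intro x hx
  simp only [Finset.coe_image, Set.mem_image, Finset.mem_coe] at hx
  obtain ⟨z', hz', rfl⟩ := hx
  exact add_mem_periods (hF.card_pos_chi_neg hs) (hF.add_mem_chi_neg hs) hz hz'

lemma dvd_pow_pred (hF : IsFlatSpectrum k F) (hk : k ≠ 0) (hs : ∑ a, F a * chi a s = 2 ^ k) :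
    #{a | F a = -1 ∧ chi a s = 1} + 1 ∣ 2 ^ (k - 1) ∧
    (#{a | F a = -1 ∧ chi a s = -1} ≠ 0 → 2 ≤ #{a | F a = -1 ∧ chi a s = 1} →
      Nat.card (periods {a | F a = -1 ∧ chi a s = -1}) = #{a | F a = -1 ∧ chi a s = 1} + 1) := by
  have hle := hF.card_le_card_periods hs
  have hdvd := card_addSubgroup_dvd_card (periods {a | F a = -1 ∧ chi a s = -1})
    {a | F a = -1 ∧ chi a s = -1} fun x hx g hg => hg x hx
  have hsum := card_split F s
  have hM := hF.card_neg_nat hk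
  obtain ⟨j, hj⟩ := exists_natCard_addSubgroup (periods {a | F a = -1 ∧ chi a s = -1})
  rw [← hsum] at hM
  generalize #{a | F a = -1 ∧ chi a s = 1} = p at *
  generalize #{a | F a = -1 ∧ chi a s = -1} = m at *
  generalize Nat.card (periods {a | F a = -1 ∧ chi a s = -1}) = q at *
  rcases Nat.eq_zero_or_pos m with rfl | hm
  · refine ⟨⟨1, by omega⟩, by simp⟩
  have hqm := Nat.le_of_dvd hm hdvd
  have hq : q ∣ 2 ^ (k - 1) := by
    rw [hj]
    refine pow_dvd_pow 2 ?_
    by_contra hlt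
    have := Nat.pow_le_pow_right (n := 2) (by norm_num) (not_le.1 hlt).le
    omega
  have hqp : q ∣ p + 1 := by
    rw [← hM, show p + m + 1 = p + 1 + m by ring] at hq
    exact (Nat.dvd_add_left hdvd).1 hq
  obtain ⟨c, hc⟩ := hqp
  have hc0 : c ≠ 0 := by
    rintro rfl
    omega
  have hcases : p + 1 = q ∨ q = 1 := by
    rcases Nat.lt_or_ge c 2 with h | h
    · left
      have : c = 1 := by omega
      rw [hc, this, mul_one]
    · right
      have : q * 2 ≤ q * c := Nat.mul_le_mul_left _ h
      have : q ≠ 0 := by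
        rintro rfl
        omega
      omega
  refine ⟨?_, fun _ h2 => by omega⟩
  rcases hcases with h | h
  · rwa [h]
  · rcases Nat.eq_zero_or_pos p with rfl | hp
    · exact one_dvd _
    · have : p = 1 := by omega
      subst this
      refine dvd_pow_self 2 fun h0 => ?_
      rw [h0] at hM
      omega

end IsFlatSpectrum

lemma isFlatSpectrum_fc {k : ℕ} (hk : k ≠ 0) {f : (Fin n → ZMod 2) → ℝ}
    (hf : ∀ x, f x = 0 ∨ f x = 1) (hf0 : f 0 = 1) (h0 : fc f 0 = 1 / 2 ^ (k - 1))
    (h : ∀ a, a ≠ 0 → fc f a = 0 ∨ fc f a = 1 / 2 ^ k ∨ fc f a = -(1 / 2 ^ k)) :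
    IsFlatSpectrum k fun a => 2 ^ k * fc f a where
  zero := by
    obtain ⟨j, rfl⟩ := Nat.exists_eq_succ_of_ne_zero hk
    rw [h0, Nat.succ_eq_add_one, add_tsub_cancel_right, pow_succ]
    field_simp
  apply_of_ne a ha := by
    rcases h a ha with h | h | h <;> simp [h]
  sum := by
    have := sum_fc_mul_chi f 0
    simp only [chi_zero_right, mul_one] at this
    rw [← Finset.mul_sum, this, hf0, mul_one]
  conv b := by
    have h2 : (fun x => f x * f x) = f := by
      funext x
      rcases hf x with h | h <;> simp [h]
    have := sum_fc_mul_fc f b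
    rw [h2] at this
    rw [← this, Finset.mul_sum, Finset.mul_sum]
    refine Finset.sum_congr rfl fun a _ => ?_
    ring

lemma card_chi_one (F : (Fin n → ZMod 2) → ℝ) (s : Fin n → ZMod 2) :
    2 * (#{a | F a = -1 ∧ chi a s = 1} : ℝ) =
      (∑ a with F a = -1, chi a s) + #{a | F a = -1} := by
  rw [← Finset.filter_filter, ← Finset.sum_boole, Finset.card_eq_sum_ones, Nat.cast_sum,
    ← Finset.sum_add_distrib, Finset.mul_sum]
  refine Finset.sum_congr rfl fun a _ => ?_
  rcases chi_eq_or a s with h | h <;> simp [h] <;> norm_num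

/-- The common kernel of the characters in the support of `F`. -/
def supportKer (F : (Fin n → ZMod 2) → ℝ) : AddSubgroup (Fin n → ZMod 2) where
  carrier := {x | ∀ a, F a ≠ 0 → chi a x = 1}
  zero_mem' := fun a _ => chi_zero_right a
  add_mem' := fun {x y} hx hy a ha => by rw [chi_add_right, hx a ha, hy a ha, one_mul]
  neg_mem' := fun {x} hx => by rwa [pi_zmod_two_neg]

lemma mem_supportKer {F : (Fin n → ZMod 2) → ℝ} {x : Fin n → ZMod 2} :
    x ∈ supportKer F ↔ ∀ a, F a ≠ 0 → chi a x = 1 := Iff.rfl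

open Classical in
lemma card_mul_card_supportKer_le (F : (Fin n → ZMod 2) → ℝ) :
    (#{a | F a = 1} : ℝ) * #{x | x ∈ supportKer F} ≤ 2 ^ n := by
  set θ : ℝ := ((#{x | x ∈ supportKer F} : ℕ) : ℝ) with hθ
  have hθ0 : 0 < θ := by
    rw [hθ]
    exact_mod_cast Finset.card_pos.2 ⟨0, by simp⟩
  let g : (Fin n → ZMod 2) → ℝ := fun x => if x ∈ supportKer F then 1 else 0
  have hg : (fun x => g x * g x) = g := by
    funext x
    simp [g]
  have hfc : ∀ a, (a = 0 ∨ F a = 1) → fc g a = θ / 2 ^ n := by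
    intro a ha
    rw [eq_div_iff (by positivity), mul_comm, ← sum_mul_chi, hθ, ← Finset.sum_boole]
    refine Finset.sum_congr rfl fun x _ => ?_
    simp only [g]
    split_ifs with hx
    · rcases ha with rfl | ha
      · simp [chi_zero_left]
      · rw [mem_supportKer.1 hx a (by simp [ha]), one_mul]
    · simp
  have hpars := sum_fc_mul_fc g 0
  rw [hg, hfc 0 (Or.inl rfl)] at hpars
  simp only [add_zero] at hpars
  have hle : ∑ a with F a = 1, fc g a * fc g a ≤ ∑ a, fc g a * fc g a :=
    Finset.sum_le_univ_sum_of_nonneg fun a => mul_self_nonneg _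
  rw [hpars, Finset.sum_congr rfl fun a ha => by
    rw [hfc a (Or.inr (Finset.mem_filter.1 ha).2)], Finset.sum_const, nsmul_eq_mul] at hle
  have h2 : (0 : ℝ) < 2 ^ n := by positivity
  have h3 : (#{a | F a = 1} * θ / 2 ^ n) * (θ / 2 ^ n) ≤ 1 * (θ / 2 ^ n) := by
    calc _ = _ := by ring
      _ ≤ _ := hle
      _ = _ := by ring
  have h4 := le_of_mul_le_mul_right h3 (by positivity)
  rwa [div_le_one h2] at h4

namespace IsFlatSpectrum

variable {f : (Fin n → ZMod 2) → ℝ} {τ : ℝ}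

lemma moment_one (hf : ∀ a, ∑ x, f x * chi a x = τ * F a) :
    ∑ x, f x * ∑ a with F a = -1, chi a x = -(τ * #{a | F a = -1}) := by
  simp only [Finset.mul_sum]
  rw [Finset.sum_comm]
  simp only [hf]
  rw [Finset.sum_congr rfl fun a ha => by rw [(Finset.mem_filter.1 ha).2], Finset.sum_const,
    nsmul_eq_mul]
  ring

lemma moment_two (hF : IsFlatSpectrum k F) (hf : ∀ a, ∑ x, f x * chi a x = τ * F a) :
    ∑ x, f x * (∑ a with F a = -1, chi a x) ^ 2 =
      τ * (#{a | F a = -1} * (#{a | F a = -1} + 1)) := by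
  simp only [sq, Finset.sum_mul_sum, ← chi_add_left]
  simp only [Finset.mul_sum]
  rw [Finset.sum_comm]
  have h : ∀ a ∈ ({a | F a = -1} : Finset (Fin n → ZMod 2)),
      ∑ x, ∑ b with F b = -1, f x * chi (a + b) x = τ * (#{a | F a = -1} + 1) := by
    intro a ha
    rw [Finset.sum_comm]
    simp only [hf, ← Finset.mul_sum]
    congr 1
    have ha' := (Finset.mem_filter.1 ha).2
    have : ∀ b ∈ ({a | F a = -1} : Finset (Fin n → ZMod 2)),
        F (a + b) = 1 + if a = b then 1 else 0 := by
      intro b hb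
      split_ifs with hab
      · rw [hab, pi_zmod_two_add_self, hF.zero]; norm_num
      · rw [hF.add_eq_one (Finset.mem_filter.1 hb).2 ha' hab, add_zero]
    rw [Finset.sum_congr rfl this, Finset.sum_add_distrib, Finset.sum_ite_eq, if_pos ha]
    simp
  rw [Finset.sum_congr rfl h, Finset.sum_const, nsmul_eq_mul]
  ring

/-- Quadratic moments of `x ↦ #{a | F a = -1 ∧ chi a x = 1} + 1` over the support of `f`. -/
lemma sum_mul_quadratic (hF : IsFlatSpectrum k F) (hf : ∀ a, ∑ x, f x * chi a x = τ * F a)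
    (u v : ℝ) :
    ∑ x, f x * (((#{a | F a = -1 ∧ chi a x = 1} : ℝ) + 1 - u) *
        ((#{a | F a = -1 ∧ chi a x = 1} : ℝ) + 1 - v)) =
      τ * (((2 ^ k / 2) ^ 2 + 3 * (2 ^ k / 2) + 4) / 4 - (u + v) * ((2 ^ k / 2 + 3) / 2)
        + 2 * (u * v)) := by
  have h0 : ∑ x, f x = τ * 2 := by
    have := hf 0
    simpa only [chi_zero_left, mul_one, hF.zero] using this
  have h1 := moment_one hf
  have h2 := hF.moment_two hf
  have hM := hF.card_neg
  set M : ℝ := ((#{a | F a = -1} : ℕ) : ℝ) with hMdef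
  have hpt : ∀ x, f x * (((#{a | F a = -1 ∧ chi a x = 1} : ℝ) + 1 - u) *
        ((#{a | F a = -1 ∧ chi a x = 1} : ℝ) + 1 - v)) =
      1 / 4 * (f x * (∑ a with F a = -1, chi a x) ^ 2) +
      (M / 2 + 1 - (u + v) / 2) * (f x * ∑ a with F a = -1, chi a x) +
      (M / 2 + 1 - u) * (M / 2 + 1 - v) * f x := by
    intro x
    have hx := card_chi_one F x
    rw [← hMdef] at hx
    rw [show (#{a | F a = -1 ∧ chi a x = 1} : ℝ) = ((∑ a with F a = -1, chi a x) + M) / 2 by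
      linarith]
    ring
  rw [Finset.sum_congr rfl fun x _ => hpt x, Finset.sum_add_distrib, Finset.sum_add_distrib,
    ← Finset.mul_sum, ← Finset.mul_sum, ← Finset.mul_sum, h0, h1, h2, ← hM]
  ring

lemma mem_supportKer_iff (hF : IsFlatSpectrum k F) (hk : k ≠ 0) {s : Fin n → ZMod 2}
    (hs : ∑ a, F a * chi a s = 2 ^ k) :
    s ∈ supportKer F ↔ #{a | F a = -1 ∧ chi a s = 1} + 1 = 2 ^ (k - 1) := by
  have hM := hF.card_neg_nat hk
  have hsum := card_split F s
  have hcard := hF.card_pos_chi_neg hs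
  constructor
  · intro h
    have : #{a | F a = -1 ∧ chi a s = -1} = 0 := by
      rw [Finset.card_eq_zero, Finset.filter_eq_empty_iff]
      rintro a - ⟨h1, h2⟩
      rw [mem_supportKer.1 h a (by rw [h1]; norm_num)] at h2
      norm_num at h2
    omega
  · intro h
    have h1 : #{a | F a = -1 ∧ chi a s = -1} = 0 := by omega
    have h2 : #{a | F a = 1 ∧ chi a s = -1} = 0 := by omega
    rw [Finset.card_eq_zero, Finset.filter_eq_empty_iff] at h1 h2
    intro a ha
    by_cases ha0 : a = 0
    · rw [ha0, chi_zero_left]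
    refine (chi_eq_or a s).resolve_right fun hc => ?_
    rcases hF.apply_of_ne a ha0 with h | h | h
    · exact ha h
    · exact h2 (Finset.mem_univ a) ⟨h, hc⟩
    · exact h1 (Finset.mem_univ a) ⟨h, hc⟩

open Classical in
lemma exists_card_eq (hF : IsFlatSpectrum k F) (hk : 5 ≤ k) (hn : k ≤ n)
    (hf : ∀ x, f x = 0 ∨ f x = 1) (hfF : ∀ x, ∑ a, F a * chi a x = 2 ^ k * f x)
    (hsum : ∀ a, ∑ x, f x * chi a x = 2 ^ (n - k) * F a) :
    ∃ s, f s = 1 ∧ #{a | F a = -1 ∧ chi a s = 1} + 1 = 2 ^ (k - 2) := by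
  by_contra! hcon
  have hk0 : k ≠ 0 := by omega
  set L : ℝ := 2 ^ k / 2 with hL
  have hLnat : ((2 ^ (k - 1) : ℕ) : ℝ) = L := by
    rw [hL, show k = k - 1 + 1 by omega, pow_succ]
    simp
  have hL16 : 16 ≤ L := by
    rw [← hLnat]
    exact_mod_cast Nat.pow_le_pow_right (n := 2) (by norm_num) (show 4 ≤ k - 1 by omega)
  have hker : ∀ s ∈ supportKer F, f s = 1 := by
    intro s hs
    have h1 : ∑ a, F a * chi a s = ∑ a, F a := by
      refine Finset.sum_congr rfl fun a _ => ?_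
      by_cases ha : F a = 0
      · simp [ha]
      · rw [mem_supportKer.1 hs a ha, mul_one]
    rw [hfF, hF.sum] at h1
    exact (mul_eq_left₀ (by positivity)).1 h1
  have hval : ∀ s, f s = 1 → (s ∈ supportKer F ∧ (#{a | F a = -1 ∧ chi a s = 1} : ℝ) + 1 = L) ∨
      (s ∉ supportKer F ∧ (#{a | F a = -1 ∧ chi a s = 1} : ℝ) + 1 ≤ L / 4) := by
    intro s hs
    have hs' : ∑ a, F a * chi a s = 2 ^ k := by rw [hfF, hs, mul_one]
    by_cases hm : s ∈ supportKer F
    · left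
      refine ⟨hm, ?_⟩
      rw [← hLnat]
      exact_mod_cast (hF.mem_supportKer_iff hk0 hs').1 hm
    · right
      refine ⟨hm, ?_⟩
      have hne := mt (hF.mem_supportKer_iff hk0 hs').2 hm
      have hne' := hcon s hs
      obtain ⟨j, hj, hpj⟩ := (Nat.dvd_prime_pow Nat.prime_two).1 (hF.dvd_pow_pred hk0 hs').1
      rw [hpj] at hne hne'
      have hj1 : j ≠ k - 1 := fun h => hne (by rw [h])
      have hj2 : j ≠ k - 2 := fun h => hne' (by rw [h])
      have h4 : 4 * 2 ^ j ≤ 2 ^ (k - 1) := by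
        calc 4 * 2 ^ j = 2 ^ (j + 2) := by ring
          _ ≤ _ := Nat.pow_le_pow_right (by norm_num) (by omega)
      rw [← hpj] at h4
      have h5 : (4 : ℝ) * (#{a | F a = -1 ∧ chi a s = 1} + 1) ≤ L := by
        rw [← hLnat]
        exact_mod_cast h4
      linarith
  have hindicator : ∀ c : ℝ, ∑ x, (if x ∈ supportKer F then c else 0) =
      #{x | x ∈ supportKer F} * c := by
    intro c
    rw [← Finset.sum_filter, Finset.sum_const, nsmul_eq_mul]
  have hupper : ∑ x, f x * (((#{a | F a = -1 ∧ chi a x = 1} : ℝ) + 1 - 1) *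
        ((#{a | F a = -1 ∧ chi a x = 1} : ℝ) + 1 - L / 4)) ≤
      ∑ x, (if x ∈ supportKer F then (L - 1) * (3 * L / 4) else 0) := by
    refine Finset.sum_le_sum fun x _ => ?_
    rcases hf x with h | h
    · rw [if_neg fun hx => by simp [hker x hx] at h, h, zero_mul]
    · rcases hval x h with ⟨hx, hp⟩ | ⟨hx, hp⟩
      · rw [if_pos hx, h, hp]
        apply le_of_eq
        ring
      · rw [if_neg hx, h, one_mul]
        refine mul_nonpos_of_nonneg_of_nonpos ?_ (by linarith)
        simp
  have hlower : ∀ c : ℝ, ∑ x, (if x ∈ supportKer F then (L - c) * (L - c) else 0) ≤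
      ∑ x, f x * (((#{a | F a = -1 ∧ chi a x = 1} : ℝ) + 1 - c) *
        ((#{a | F a = -1 ∧ chi a x = 1} : ℝ) + 1 - c)) := by
    intro c
    refine Finset.sum_le_sum fun x _ => ?_
    rcases hf x with h | h
    · rw [if_neg fun hx => by simp [hker x hx] at h, h, zero_mul]
    · rcases hval x h with ⟨hx, hp⟩ | ⟨hx, hp⟩
      · rw [if_pos hx, h, hp, one_mul]
      · rw [if_neg hx, h, one_mul]
        exact mul_self_nonneg _
  rw [hindicator, hF.sum_mul_quadratic hsum, ← hL] at hupper
  simp only [hindicator, hF.sum_mul_quadratic hsum, ← hL] at hlower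
  have hbessel := card_mul_card_supportKer_le F
  obtain ⟨j, hj⟩ := exists_natCard_addSubgroup (supportKer F)
  have hθ : (#{x | x ∈ supportKer F} : ℝ) = 2 ^ j := by
    rw [← Fintype.card_subtype, ← Nat.card_eq_fintype_card]
    exact_mod_cast hj
  have hA : (#{a | F a = 1} : ℝ) = 3 * L - 3 := by
    have := hF.card_pos
    linarith
  have h2n : (2 : ℝ) ^ n = 2 * L * 2 ^ (n - k) := by
    rw [hL, mul_div_cancel₀ _ (two_ne_zero), ← pow_add]
    congr 1
    omega
  rw [hθ, hA, h2n] at hbessel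
  rw [hθ] at hupper
  rw [hθ] at hlower
  have hθpos : (0 : ℝ) < 2 ^ j := by positivity
  have hτpos : (0 : ℝ) < 2 ^ (n - k) := by positivity
  have hlt1 : (2 : ℝ) ^ j < 2 ^ (n - k) := by
    by_contra! hle
    nlinarith
  have hlt2 : (2 : ℝ) ^ (n - k) < 2 ^ (j + 3) := by
    have h1 : (2 : ℝ) ^ (n - k) * (L + 4) * (L - 1) ≤ 6 * 2 ^ j * L * (L - 1) := by
      linarith
    have h2 := le_of_mul_le_mul_right h1 (by linarith)
    rw [pow_add]
    by_contra! hle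
    nlinarith
  rw [pow_lt_pow_iff_right₀ (by norm_num)] at hlt1 hlt2
  have hnk : n - k = j + 1 ∨ n - k = j + 2 := by omega
  rcases hnk with h | h
  · have := hlower 0
    rw [h, pow_add, mul_assoc, mul_le_mul_iff_right₀ hθpos] at this
    nlinarith
  · have := hlower ((L + 6) / 7)
    rw [h, pow_add, mul_assoc, mul_le_mul_iff_right₀ hθpos] at this
    nlinarith

end IsFlatSpectrum

/-- The subgroup of `F_2^n` generated by the subgroup `K` and the vector `c`. -/
def adjoinVector (K : AddSubgroup (Fin n → ZMod 2)) (c : Fin n → ZMod 2) :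
    AddSubgroup (Fin n → ZMod 2) where
  carrier := {w | w ∈ K ∨ w + c ∈ K}
  zero_mem' := Or.inl K.zero_mem
  add_mem' := fun {a b} ha hb => by
    rcases ha with ha | ha <;> rcases hb with hb | hb
    · exact Or.inl (K.add_mem ha hb)
    · right
      rw [add_assoc]
      exact K.add_mem ha hb
    · right
      rw [add_right_comm]
      exact K.add_mem ha hb
    · left
      have := K.add_mem ha hb
      rwa [show a + c + (b + c) = c + (c + (a + b)) by abel, pi_zmod_two_add_add_self] at this
  neg_mem' := fun {a} ha => by rwa [pi_zmod_two_neg]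

lemma mem_adjoinVector {K : AddSubgroup (Fin n → ZMod 2)} {c w : Fin n → ZMod 2} :
    w ∈ adjoinVector K c ↔ w ∈ K ∨ w + c ∈ K := Iff.rfl

lemma card_adjoinVector {K : AddSubgroup (Fin n → ZMod 2)} {c : Fin n → ZMod 2} (hc : c ∉ K) :
    Nat.card (adjoinVector K c) = 2 * Nat.card K := by
  have hset : (adjoinVector K c : Set (Fin n → ZMod 2)) =
      (K : Set (Fin n → ZMod 2)) ∪ (c + ·) '' (K : Set (Fin n → ZMod 2)) := by
    ext w
    simp only [SetLike.mem_coe, mem_adjoinVector, Set.mem_union, Set.mem_image]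
    refine or_congr_right ⟨fun h => ⟨w + c, h, ?_⟩, ?_⟩
    · rw [add_comm w, pi_zmod_two_add_add_self]
    · rintro ⟨g, hg, rfl⟩
      rwa [add_comm, pi_zmod_two_add_add_self]
  have hdisj : Disjoint (K : Set (Fin n → ZMod 2)) ((c + ·) '' (K : Set (Fin n → ZMod 2))) := by
    rw [Set.disjoint_left]
    rintro _ hK ⟨g, hg, rfl⟩
    exact hc ((K.add_mem_cancel_right hg).1 hK)
  have h := Set.ncard_union_eq hdisj (Set.toFinite _) (Set.toFinite _)
  rw [← hset, Set.ncard_image_of_injective _ (add_right_injective c)] at h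
  rw [two_mul]
  exact h

lemma exists_insert_eq_coset {K : AddSubgroup (Fin n → ZMod 2)} {Z : Finset (Fin n → ZMod 2)}
    (hZ : Z.Nonempty) (hcard : #Z + 1 = Nat.card K) (h : ∀ z ∈ Z, ∀ z' ∈ Z, z + z' ∈ K) :
    ∃ e ∉ Z, ∀ x, x ∈ Z ∨ x = e ↔ x + e ∈ K := by
  classical
  obtain ⟨z, hz⟩ := hZ
  let C : Finset (Fin n → ZMod 2) := {x | z + x ∈ K}
  have hC : #C = Nat.card K := by
    have : (C : Set (Fin n → ZMod 2)) = (z + ·) '' (K : Set (Fin n → ZMod 2)) := by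
      ext x
      simp only [C, Finset.coe_filter, Finset.mem_univ, true_and, Set.mem_ofPred_eq, Set.mem_image,
        SetLike.mem_coe]
      refine ⟨fun h => ⟨z + x, h, pi_zmod_two_add_add_self z x⟩, ?_⟩
      rintro ⟨g, hg, rfl⟩
      rwa [pi_zmod_two_add_add_self]
    rw [← Set.ncard_coe_finset, this, Set.ncard_image_of_injective _ (add_right_injective z)]
    rfl
  have hZC : Z ⊆ C := fun x hx => by simpa [C] using h z hz x hx
  obtain ⟨e, he, heC⟩ := Finset.exists_eq_insert_iff.2 ⟨hZC, hcard.trans hC.symm⟩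
  refine ⟨e, he, fun x => ?_⟩
  have hze : z + e ∈ K := by
    have : e ∈ C := heC ▸ Finset.mem_insert_self e Z
    simpa [C] using this
  have hx : x ∈ C ↔ x ∈ Z ∨ x = e := by rw [← heC, Finset.mem_insert, or_comm]
  rw [← hx]
  simp only [C, Finset.mem_filter, Finset.mem_univ, true_and]
  rw [← K.add_mem_cancel_right hze, show z + x + (z + e) = z + (z + (x + e)) by abel,
    pi_zmod_two_add_add_self]

lemma mem_iff_add_mem_of_card_eq {K : AddSubgroup (Fin n → ZMod 2)} {X : Finset (Fin n → ZMod 2)}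
    (hcard : #X = Nat.card K) (h : ∀ x ∈ X, ∀ g ∈ K, x + g ∈ X) {x : Fin n → ZMod 2} (hx : x ∈ X)
    (y : Fin n → ZMod 2) : y ∈ X ↔ y + x ∈ K := by
  have hsub : (x + ·) '' (K : Set (Fin n → ZMod 2)) ⊆ X := by
    rintro _ ⟨g, hg, rfl⟩
    exact h x hx g hg
  have heq : (x + ·) '' (K : Set (Fin n → ZMod 2)) = X := by
    refine Set.eq_of_subset_of_ncard_le hsub ?_ (Set.toFinite _)
    rw [Set.ncard_image_of_injective _ (add_right_injective x), Set.ncard_coe_finset, hcard]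
    rfl
  rw [← Finset.mem_coe, ← heq]
  constructor
  · rintro ⟨g, hg, rfl⟩
    rwa [add_comm, pi_zmod_two_add_add_self]
  · intro hy
    refine ⟨y + x, hy, ?_⟩
    simp only
    rw [add_comm y, pi_zmod_two_add_add_self]

namespace IsFlatSpectrum

/-- If some point of the support of `f` splits `{F = -1}` into almost equal parts, then
`{F = -1}` is a punctured coset. -/
lemma exists_coset (hF : IsFlatSpectrum k F) (hk : 5 ≤ k) {s : Fin n → ZMod 2}
    (hs : ∑ a, F a * chi a s = 2 ^ k)
    (hcard : #{a | F a = -1 ∧ chi a s = 1} + 1 = 2 ^ (k - 2)) :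
    ∃ (W : AddSubgroup (Fin n → ZMod 2)) (e : Fin n → ZMod 2), Nat.card W = 2 ^ (k - 1) ∧
      ∀ a, F a = -1 ↔ a + e ∈ W ∧ a ≠ e := by
  have hk0 : k ≠ 0 := by omega
  have hM := hF.card_neg_nat hk0
  have hsplit := card_split F s
  have hpow : 2 ^ (k - 1) = 2 * 2 ^ (k - 2) := by
    rw [← pow_succ']
    congr 1
    omega
  have hpow8 : 8 ≤ 2 ^ (k - 2) :=
    Nat.pow_le_pow_right (n := 2) (by norm_num) (show 3 ≤ k - 2 by omega)
  have hXcard : #{a | F a = -1 ∧ chi a s = -1} = 2 ^ (k - 2) := by omega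
  have hK := (hF.dvd_pow_pred hk0 hs).2 (by omega) (by omega)
  have hZZ := fun z hz z' hz' =>
    add_mem_periods (z := z) (z' := z') (hF.card_pos_chi_neg hs) (hF.add_mem_chi_neg hs) hz hz'
  have hXK : ∀ x ∈ ({a | F a = -1 ∧ chi a s = -1} : Finset (Fin n → ZMod 2)),
      ∀ g ∈ periods {a | F a = -1 ∧ chi a s = -1},
      x + g ∈ ({a | F a = -1 ∧ chi a s = -1} : Finset (Fin n → ZMod 2)) :=
    fun x hx g hg => hg x hx
  generalize periods {a | F a = -1 ∧ chi a s = -1} = K at *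
  have hZne : ({a | F a = -1 ∧ chi a s = 1} : Finset (Fin n → ZMod 2)).Nonempty := by
    rw [← Finset.card_pos]
    omega
  obtain ⟨x₀, hx₀⟩ : ({a | F a = -1 ∧ chi a s = -1} : Finset (Fin n → ZMod 2)).Nonempty := by
    rw [← Finset.card_pos]
    omega
  obtain ⟨e, heZ, he⟩ := exists_insert_eq_coset hZne hK.symm hZZ
  have hX := mem_iff_add_mem_of_card_eq (hXcard.trans (hcard.symm.trans hK.symm)) hXK hx₀
  have heX : e + x₀ ∉ K := by
    intro h
    obtain ⟨z, hz⟩ := hZne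
    have h1 := (he z).1 (Or.inl hz)
    have h2 := K.add_mem h1 h
    rw [show z + e + (e + x₀) = e + (e + (z + x₀)) by abel, pi_zmod_two_add_add_self, ← hX] at h2
    rw [Finset.mem_filter] at hz h2
    rw [hz.2.2] at h2
    norm_num at h2
  have heX' : e ∉ ({a | F a = -1 ∧ chi a s = -1} : Finset (Fin n → ZMod 2)) := by rwa [hX]
  refine ⟨adjoinVector K (e + x₀), e, ?_, fun a => ?_⟩
  · rw [card_adjoinVector heX, hK, hcard, hpow]
  · rw [mem_adjoinVector, ← he, show a + e + (e + x₀) = e + (e + (a + x₀)) by abel,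
      pi_zmod_two_add_add_self, ← hX]
    have : F a = -1 ↔ a ∈ ({a | F a = -1 ∧ chi a s = 1} : Finset (Fin n → ZMod 2)) ∨
        a ∈ ({a | F a = -1 ∧ chi a s = -1} : Finset (Fin n → ZMod 2)) := by
      rcases chi_eq_or a s with h | h <;> simp [h] <;> norm_num
    rw [this]
    constructor
    · rintro (h | h)
      · exact ⟨Or.inl (Or.inl h), fun hae => heZ (hae ▸ h)⟩
      · exact ⟨Or.inr h, fun hae => heX' (hae ▸ h)⟩
    · rintro ⟨(h | h) | h, hne⟩
      · exact Or.inl h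
      · exact absurd h hne
      · exact Or.inr h

end IsFlatSpectrum

lemma punctured_coset_add_self {B : Set (Fin n → ZMod 2)} {W : AddSubgroup (Fin n → ZMod 2)}
    {e : Fin n → ZMod 2} (hW : 2 < Nat.card W) (hB : ∀ a, a ∈ B ↔ a + e ∈ W ∧ a ≠ e) :
    B + B = W := by
  ext w
  rw [Set.mem_add, SetLike.mem_coe]
  constructor
  · rintro ⟨a, ha, b, hb, rfl⟩
    have := W.add_mem ((hB a).1 ha).1 ((hB b).1 hb).1
    rwa [show a + e + (b + e) = e + (e + (a + b)) by abel, pi_zmod_two_add_add_self] at this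
  · intro hw
    have hlt : ({0, w} : Set (Fin n → ZMod 2)).ncard < (W : Set (Fin n → ZMod 2)).ncard :=
      (Set.ncard_insert_le _ _).trans_lt (by rw [Set.ncard_singleton]; exact hW)
    obtain ⟨v, hv, hv'⟩ := Set.exists_mem_notMem_of_ncard_lt_ncard hlt
    simp only [Set.mem_insert_iff, Set.mem_singleton_iff, not_or] at hv'
    refine ⟨e + v, (hB _).2 ⟨?_, by simpa using hv'.1⟩, e + (v + w), (hB _).2 ⟨?_, ?_⟩, ?_⟩
    · rw [add_comm, pi_zmod_two_add_add_self]
      exact hv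
    · rw [add_comm, pi_zmod_two_add_add_self]
      exact W.add_mem hv hw
    · rw [Ne, add_eq_left, pi_zmod_two_add_eq_zero]
      exact hv'.2
    · rw [show e + v + (e + (v + w)) = e + (e + (v + (v + w))) by abel, pi_zmod_two_add_add_self,
        pi_zmod_two_add_add_self]

lemma span_punctured_coset {B : Set (Fin n → ZMod 2)} {W : AddSubgroup (Fin n → ZMod 2)}
    {e : Fin n → ZMod 2} (hW : 2 < Nat.card W) (hB : ∀ a, a ∈ B ↔ a + e ∈ W ∧ a ≠ e) :
    Submodule.span (ZMod 2) B = AddSubgroup.toZModSubmodule 2 (adjoinVector W e) := by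
  have hBB := punctured_coset_add_self hW hB
  have hWspan : ∀ w ∈ W, w ∈ Submodule.span (ZMod 2) B := by
    intro w hw
    rw [← SetLike.mem_coe, ← hBB] at hw
    obtain ⟨a, ha, b, hb, rfl⟩ := Set.mem_add.1 hw
    exact Submodule.add_mem _ (Submodule.subset_span ha) (Submodule.subset_span hb)
  refine le_antisymm (Submodule.span_le.2 fun a ha => Or.inr ((hB a).1 ha).1) ?_
  rintro w (hw | hw)
  · exact hWspan w hw
  · have hzero : (0 : Fin n → ZMod 2) ∈ B + B := by
      rw [hBB]
      exact W.zero_mem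
    obtain ⟨b, hb, -⟩ := Set.mem_add.1 hzero
    have he : e ∈ Submodule.span (ZMod 2) B := by
      rw [← pi_zmod_two_add_add_self b e]
      exact Submodule.add_mem _ (Submodule.subset_span hb) (hWspan _ ((hB b).1 hb).1)
    exact (Submodule.add_mem_iff_left _ he).1 (hWspan _ hw)

end

theorem stmt_10 {n k : ℕ} (hk : 5 ≤ k) (hn : k ≤ n) (f : (Fin n → ZMod 2) → ℝ)
    (hf : ∀ x, f x = 0 ∨ f x = 1) (hf0 : f 0 = 1)
    (h0 : fc f 0 = 1 / 2 ^ (k - 1))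
    (h : ∀ α : Fin n → ZMod 2, α ≠ 0 →
      fc f α = 0 ∨ fc f α = 1 / 2 ^ k ∨ fc f α = -(1 / 2 ^ k)) :
    Nat.card (Submodule.span (ZMod 2) {β : Fin n → ZMod 2 | fc f β = -(1 / 2 ^ k)}) = 2 ^ k ∧
    2 ^ k = 2 * ({β : Fin n → ZMod 2 | fc f β = -(1 / 2 ^ k)}.ncard + 1) ∧
    ∃ W : Submodule (ZMod 2) (Fin n → ZMod 2),
      Module.finrank (ZMod 2) W = k - 1 ∧
      {β : Fin n → ZMod 2 | fc f β = -(1 / 2 ^ k)} +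
        {β : Fin n → ZMod 2 | fc f β = -(1 / 2 ^ k)} = (W : Set (Fin n → ZMod 2)) := by
  have hk0 : k ≠ 0 := by omega
  have hF := isFlatSpectrum_fc hk0 hf hf0 h0 h
  have h2k : (2 : ℝ) ^ k ≠ 0 := by positivity
  have hiff : ∀ a, fc f a = -(1 / 2 ^ k) ↔ 2 ^ k * fc f a = -1 := by
    intro a
    rw [eq_comm, ← mul_right_inj' h2k, eq_comm]
    simp [h2k]
  simp only [hiff]
  have hfF : ∀ x, ∑ a, 2 ^ k * fc f a * chi a x = 2 ^ k * f x := by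
    intro x
    rw [← sum_fc_mul_chi f x, Finset.mul_sum]
    simp only [mul_assoc]
  obtain ⟨s, hs, hcard⟩ := hF.exists_card_eq hk hn hf hfF fun a => by
    rw [sum_mul_chi, ← mul_assoc, ← pow_add, Nat.sub_add_cancel hn]
  obtain ⟨W, e, hWcard, hB⟩ := hF.exists_coset hk (by rw [hfF, hs, mul_one]) hcard
  have hM := hF.card_neg_nat hk0
  have hpow : 2 ^ k = 2 * 2 ^ (k - 1) := by
    rw [← pow_succ', Nat.sub_add_cancel (by omega)]
  have hpow16 : 16 ≤ 2 ^ (k - 1) :=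
    Nat.pow_le_pow_right (n := 2) (by norm_num) (show 4 ≤ k - 1 by omega)
  have hW2 : 2 < Nat.card W := by omega
  have heW : e ∉ W := by
    intro he
    have he0 : e = 0 := by
      by_contra hne
      have := (hB 0).2 ⟨by rwa [zero_add], Ne.symm hne⟩
      exact hF.ne_zero_of_eq_neg_one this rfl
    subst he0
    simp only [add_zero] at hB
    obtain ⟨a, ha, b, hb, hab⟩ :=
      Finset.one_lt_card.1 (show 1 < #{a | 2 ^ k * fc f a = -1} by omega)
    simp only [Finset.mem_filter, Finset.mem_univ, true_and] at ha hb
    have h1 := hF.add_eq_one hb ha hab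
    have h2 := (hB (a + b)).2 ⟨W.add_mem ((hB a).1 ha).1 ((hB b).1 hb).1,
      fun h => hab (pi_zmod_two_add_eq_zero.1 h)⟩
    rw [h2] at h1
    norm_num at h1
  refine ⟨?_, ?_, AddSubgroup.toZModSubmodule 2 W, ?_, punctured_coset_add_self hW2 hB⟩
  · rw [span_punctured_coset (B := {a | 2 ^ k * fc f a = -1}) hW2 hB, hpow, ← hWcard]
    exact card_adjoinVector heW
  · rw [hpow, ← hM, ← Set.ncard_coe_finset, Finset.coe_filter]
    simp
  · have hc := Module.natCard_eq_pow_finrank (K := ZMod 2) (V := AddSubgroup.toZModSubmodule 2 W)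
    rw [Nat.card_zmod] at hc
    exact Nat.pow_right_injective le_rfl (hc.symm.trans hWcard)
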